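/- Let f: F_2^m → F_2 be a Boolean function of algebraic degree d ≥ 1 and let n > m. Let S_d = {I ⊆ {1,…,m} : |I| = d, a_I ≠ 0} be the set of degree-d monomials in the ANF of f, and let I_min be the lexicographically minimal element of S_d. Then the ANF coefficient of the monomial I_min (viewed as a subset of {1,…,n}) in the ANF of the n-variable function f*(x_1,…,x_n) = ⊕_{i=1}^{n−m+1} f(x_i,…,x_{i+m−1}) is nonzero; in particular, for every shift l ∈ {2,…,n−m+1}, the shifted set I_min + l = {i + l−1 : i ∈ I_min} is distinct from I_min, so the monomial I_min is not cancelled by any monomial arising from the l-th summand. -/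

import Mathlib

/-- The CA-based construction: given a local rule `f` of `m` variables and `n ≥ m`,
the `n`-variable function `f*` is the XOR of all output cells of the no-boundary CA. -/
def caStar (m n : ℕ) (h : m ≤ n) (f : (Fin m → ZMod 2) → ZMod 2) :
    (Fin n → ZMod 2) → ZMod 2 :=
  fun x => ∑ i : Fin (n - m + 1),
    f (fun j => x ⟨i.val + j.val, by have hi := i.isLt; have hj := j.isLt; omega⟩)

/-- The ANF coefficient `a_I` of a Boolean function, via the Möbius transform:
`a_I = ⊕_{x : supp(x) ⊆ I} f(x)`. -/
def anf {n : ℕ} (f : (Fin n → ZMod 2) → ZMod 2) (I : Finset (Fin n)) : ZMod 2 :=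
  ∑ x ∈ Finset.univ.filter (fun x : Fin n → ZMod 2 => ∀ i, x i = 1 → i ∈ I), f x

/-- The algebraic degree of a Boolean function: `max {|I| : a_I ≠ 0}` (0 for the zero function). -/
def algDegree {n : ℕ} (f : (Fin n → ZMod 2) → ZMod 2) : ℕ :=
  (Finset.univ.filter fun I : Finset (Fin n) => anf f I ≠ 0).sup Finset.card

/-- The Walsh transform `W_f(a) = Σ_x (-1)^(f(x) ⊕ a·x)`. -/
def walsh {n : ℕ} (f : (Fin n → ZMod 2) → ZMod 2) (a : Fin n → ZMod 2) : ℤ :=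
  ∑ x : Fin n → ZMod 2, (-1 : ℤ) ^ (f x + ∑ i, a i * x i).val

/-- The semi-bent value `λ`: `2^((n+1)/2)` for odd `n`, `2^((n+2)/2)` for even `n`. -/
def sbLambda (n : ℕ) : ℤ := if Odd n then 2 ^ ((n + 1) / 2) else 2 ^ ((n + 2) / 2)

/-- A Boolean function is semi-bent if its Walsh transform takes only the values `0, λ, -λ`. -/
def semiBent {n : ℕ} (f : (Fin n → ZMod 2) → ZMod 2) : Prop :=
  ∀ a, walsh f a = 0 ∨ walsh f a = sbLambda n ∨ walsh f a = -sbLambda n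

/-- A Boolean function is balanced if it takes the value 1 exactly `2^(n-1)` times. -/
def balanced {n : ℕ} (f : (Fin n → ZMod 2) → ZMod 2) : Prop :=
  (Finset.univ.filter fun x => f x = 1).card = 2 ^ (n - 1)

/-- `b` is a linear structure of `g` if the derivative `D_b g(x) = g(x) ⊕ g(x ⊕ b)` is constant. -/
def isLinearStructure {n : ℕ} (g : (Fin n → ZMod 2) → ZMod 2)
    (b : Fin n → ZMod 2) : Prop :=
  (∀ x, g x + g (x + b) = 0) ∨ (∀ x, g x + g (x + b) = 1)

/-- Lexicographic (strict) order on finite sets of indices, via their sorted lists. -/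
def lexLt {m : ℕ} (I J : Finset (Fin m)) : Prop :=
  List.Lex (· < ·) (I.sort (· ≤ ·)) (J.sort (· ≤ ·))

theorem aux_zero {m n : ℕ} (f : (Fin m → ZMod 2) → ZMod 2) (e : Fin m → Fin n)
    (K : Finset (Fin n)) (k : Fin n) (hk : k ∈ K) (hke : ∀ j, e j ≠ k) :
    anf (fun x => f (fun j => x (e j))) K = 0 := by
  unfold anf
  refine Finset.sum_involution (fun x _ => Function.update x k (x k + 1)) ?_ ?_ ?_ ?_
  · intro x _
    have : (fun j => Function.update x k (x k + 1) (e j)) = fun j => x (e j) := by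
      funext j
      rw [Function.update_of_ne (hke j)]
    simp only [this]
    exact CharTwo.add_self_eq_zero _
  · intro x _ _ h
    have := congrFun h k
    simp at this
  · intro x hx
    simp only [Finset.mem_filter, Finset.mem_univ, true_and] at hx ⊢
    intro i hi
    by_cases hik : i = k
    · rw [hik]; exact hk
    · rw [Function.update_of_ne hik] at hi
      exact hx i hi
  · intro x _
    funext i
    by_cases hik : i = k
    · subst hik
      simp only [Function.update_self]
      rw [add_assoc, CharTwo.add_self_eq_zero, add_zero]
    · simp [Function.update_of_ne hik]

theorem aux_map {m n : ℕ} (f : (Fin m → ZMod 2) → ZMod 2) (e : Fin m → Fin n)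
    (he : Function.Injective e) (K : Finset (Fin n)) (J : Finset (Fin m))
    (hJ : ∀ j, e j ∈ K ↔ j ∈ J) (hK : ∀ k ∈ K, ∃ j, e j = k) :
    anf (fun x => f (fun j => x (e j))) K = anf f J := by
  unfold anf
  refine Finset.sum_bij' (fun x _ => fun j => x (e j))
    (fun y _ => Function.extend e y 0) ?_ ?_ ?_ ?_ ?_
  · intro x hx
    simp only [Finset.mem_filter, Finset.mem_univ, true_and] at hx ⊢
    intro i hi
    exact (hJ i).1 (hx _ hi)
  · intro y hy
    simp only [Finset.mem_filter, Finset.mem_univ, true_and] at hy ⊢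
    intro i hi
    by_cases h : ∃ j, e j = i
    · obtain ⟨j, rfl⟩ := h
      rw [he.extend_apply] at hi
      exact (hJ j).2 (hy j hi)
    · rw [Function.extend_apply' _ _ _ h] at hi
      simp at hi
  · intro x hx
    simp only [Finset.mem_filter, Finset.mem_univ, true_and] at hx
    funext i
    by_cases h : ∃ j, e j = i
    · obtain ⟨j, rfl⟩ := h
      rw [he.extend_apply]
    · rw [Function.extend_apply' _ _ _ h]
      have h1 : x i ≠ 1 := fun h1 => h (hK i (hx i h1))
      have : ∀ a : ZMod 2, a ≠ 1 → 0 = a := by decide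
      exact this _ h1
  · intro y _
    funext j
    exact he.extend_apply _ _ _
  · intro x _
    rfl

theorem aux_lex {m : ℕ} (I J : Finset (Fin m)) (hI : I.Nonempty) (a : Fin m) (ha : a ∈ J)
    (hlt : ∀ b ∈ I, a < b) (h : lexLt I J) : False := by
  unfold lexLt at h
  have hs := J.pairwise_sort (· ≤ ·)
  have ha' : a ∈ J.sort (· ≤ ·) := (Finset.mem_sort _).2 ha
  have hI' : ∀ b ∈ I.sort (· ≤ ·), a < b := fun b hb => hlt b ((Finset.mem_sort _).1 hb)
  obtain ⟨b, hb⟩ := hI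
  have hb' : b ∈ I.sort (· ≤ ·) := (Finset.mem_sort _).2 hb
  generalize I.sort (· ≤ ·) = L at *
  generalize J.sort (· ≤ ·) = M at *
  cases h with
  | nil => simp at hb'
  | @cons c l₁ l₂ h =>
    have h1 := hI' c (by simp)
    rcases List.mem_cons.1 ha' with h2 | h2
    · exact absurd h1 (by simp [h2])
    · exact absurd h1 (not_lt.2 ((List.pairwise_cons.1 hs).1 a h2))
  | @rel c l₁ c' l₂ h =>
    have h1 := hI' c (by simp)
    rcases List.mem_cons.1 ha' with h2 | h2
    · subst h2
      exact absurd h1 (not_lt.2 h.le)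
    · exact absurd (h1.trans h) (not_lt.2 ((List.pairwise_cons.1 hs).1 a h2))

/-- the lexicographically minimal degree-`d` monomial `I_min` of `f`
survives in the ANF of `f*`, and every shifted copy of it is distinct from it. -/
theorem caStar_min_monomial_survives (m n d : ℕ) (hn : m < n)
    (f : (Fin m → ZMod 2) → ZMod 2)
    (hdeg : algDegree f = d) (hd : 1 ≤ d)
    (Imin : Finset (Fin m))
    (hcard : Imin.card = d) (hcoef : anf f Imin ≠ 0)
    (hmin : ∀ J : Finset (Fin m), J.card = d → anf f J ≠ 0 → J ≠ Imin → lexLt Imin J) :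
    anf (caStar m n (le_of_lt hn) f) (Imin.map (Fin.castLEEmb (le_of_lt hn))) ≠ 0 ∧
    ∀ l : ℕ, 2 ≤ l → l ≤ n - m + 1 →
      (Imin.image fun i : Fin m => (i : ℕ) + l - 1) ≠
        (Imin.image fun i : Fin m => (i : ℕ)) := by
  have hne : Imin.Nonempty := Finset.card_pos.1 (by omega)
  constructor
  · have hsum : anf (caStar m n (le_of_lt hn) f) (Imin.map (Fin.castLEEmb (le_of_lt hn))) =
        ∑ i : Fin (n - m + 1), anf (fun x : Fin n → ZMod 2 => f (fun j => x
          ((fun j : Fin m => (⟨i.val + j.val, by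
            have hi := i.isLt; have hj := j.isLt; omega⟩ : Fin n)) j)))
          (Imin.map (Fin.castLEEmb (le_of_lt hn))) := by
      unfold anf caStar
      rw [Finset.sum_comm]
    have hmem : ∀ k : Fin n, k ∈ Imin.map (Fin.castLEEmb (le_of_lt hn)) ↔
        ∃ a ∈ Imin, a.val = k.val := by
      intro k
      simp [Finset.mem_map, Fin.ext_iff]
    rw [hsum, Finset.sum_eq_single 0]
    · rw [aux_map f _ _ _ Imin]
      · exact hcoef
      · intro j
        rw [hmem]
        constructor
        · rintro ⟨a, ha, h⟩
          have : a = j := by ext; simpa using h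
          exact this ▸ ha
        · intro h
          exact ⟨j, h, by simp⟩
      · intro k hk
        obtain ⟨a, ha, h⟩ := (hmem k).1 hk
        exact ⟨a, by ext; simpa using h⟩
      · intro a b h
        ext
        simpa using h
    · intro i _ hi0
      have hi : 0 < i.val := Nat.pos_of_ne_zero (fun h => hi0 (Fin.ext (by simpa using h)))
      set e : Fin m → Fin n := fun j => ⟨i.val + j.val, by
            have hi := i.isLt; have hj := j.isLt; omega⟩ with he_def
      have hev : ∀ j, (e j).val = i.val + j.val := fun j => rfl
      have he : Function.Injective e := by
        intro a b h
        have := congrArg Fin.val h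
        rw [hev, hev] at this
        ext; omega
      set K := Imin.map (Fin.castLEEmb (le_of_lt hn)) with hKdef
      by_cases hK : ∀ k ∈ K, ∃ j, e j = k
      · set J : Finset (Fin m) := Finset.univ.filter (fun j => e j ∈ K) with hJdef
        have hJ : ∀ j, e j ∈ K ↔ j ∈ J := by simp [hJdef]
        rw [aux_map f e he K J hJ hK]
        by_contra hne0
        have hJK : J.map ⟨e, he⟩ = K := by
          ext k
          simp only [Finset.mem_map, Function.Embedding.coeFn_mk]
          constructor
          · rintro ⟨j, hj, rfl⟩
            exact (hJ j).2 hj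
          · intro hk
            obtain ⟨j, rfl⟩ := hK k hk
            exact ⟨j, (hJ j).1 hk, rfl⟩
        have hJc : J.card = d := by
          rw [← hcard, ← Finset.card_map ⟨e, he⟩, hJK, hKdef, Finset.card_map]
        have hb := Imin.min'_mem hne
        obtain ⟨a, ha⟩ := hK (Fin.castLE (le_of_lt hn) (Imin.min' hne))
          ((hmem _).2 ⟨_, hb, rfl⟩)
        have haJ : a ∈ J := (hJ a).1 (by rw [ha]; exact (hmem _).2 ⟨_, hb, rfl⟩)
        have hav : i.val + a.val = (Imin.min' hne).val := congrArg Fin.val ha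
        have hlt : ∀ b ∈ Imin, a < b := by
          intro b hb
          have h1 : (Imin.min' hne).val ≤ b.val := Imin.min'_le b hb
          exact Fin.lt_def.2 (by omega)
        have hJne : J ≠ Imin := by
          intro h
          exact lt_irrefl _ (hlt a (h ▸ haJ))
        exact aux_lex Imin J hne a haJ hlt (hmin J hJc hne0 hJne)
      · push Not at hK
        obtain ⟨k, hk, hke⟩ := hK
        exact aux_zero f e K k hk hke
    · intro h
      exact absurd (Finset.mem_univ _) h
  · intro l hl _ h
    have hb := Imin.min'_mem hne
    have h1 : (Imin.min' hne).val ∈ Imin.image (fun i : Fin m => (i : ℕ)) :=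
      Finset.mem_image.2 ⟨_, hb, rfl⟩
    rw [← h] at h1
    obtain ⟨c, hc, h2⟩ := Finset.mem_image.1 h1
    have h3 : (Imin.min' hne).val ≤ c.val := Imin.min'_le c hc
    omega
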